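/- There is an absolute constant C > 0 with the following property. Let P and Q be disjoint finite sets of points in the Euclidean plane ℝ² with |P| = |Q| = n, and suppose that every line in the plane contains at most n points of P ∪ Q. Then the number of bichromatic induced lines of (P, Q) is at least C · n². -/

import Mathlib

open Set

noncomputable section

/-- The line through two points of the plane, as a set. -/
def lineThrough (p q : ℝ × ℝ) : Set (ℝ × ℝ) := (affineSpan ℝ {p, q} : AffineSubspace ℝ (ℝ × ℝ))

/-- A subset of the plane is a line if it is the affine span of two distinct points. -/
def IsLine (L : Set (ℝ × ℝ)) : Prop := ∃ p q : ℝ × ℝ, p ≠ q ∧ L = lineThrough p q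

/-- The richness of a line `L` with respect to a finite point set `S`:
the number of points of `S` incident on `L`. -/
def richness (S : Finset (ℝ × ℝ)) (L : Set (ℝ × ℝ)) : ℕ := ((S : Set (ℝ × ℝ)) ∩ L).ncard

/-- The lines induced by a finite point set `S`: lines passing through
at least two distinct points of `S`. -/
def InducedLines (S : Finset (ℝ × ℝ)) : Set (Set (ℝ × ℝ)) :=
  {L | IsLine L ∧ ∃ p ∈ S, ∃ q ∈ S, p ≠ q ∧ p ∈ L ∧ q ∈ L}

/-- The bichromatic induced lines of a bichromatic point set `(P, Q)`:
lines incident on at least one point of `P` and at least one point of `Q`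
(for disjoint `P`, `Q` such a line passes through two distinct points of `P ∪ Q`). -/
def BichromLines (P Q : Finset (ℝ × ℝ)) : Set (Set (ℝ × ℝ)) :=
  {L | IsLine L ∧ (∃ p ∈ P, p ∈ L) ∧ (∃ q ∈ Q, q ∈ L)}

/-!
A shear preserves all incidences and makes the first coordinates of the points distinct, so that no
line through two of them is vertical. Cut every line at its points: a plane graph on `v` such points
has at most `3 v` edges, so many segments between few points force many crossings. Since two lines
cross at most once, this yields the Szemerédi–Trotter bound `O(v² / t³ + v / t)` for the number of
lines with at least `t` points.

Each of the `n²` red-blue pairs lies on exactly one bichromatic line. By Szemerédi–Trotter, the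
lines whose number of points lies between a large constant and a small multiple of `n` carry at most
a quarter of the pairs. If the lines with boundedly many points carry half of the pairs, there are
quadratically many of them. Otherwise one of the boundedly many remaining lines carries a positive
proportion of the pairs, hence linearly many points of both colours. As it has at most `n` points in
total, it misses half of the points of one colour, and joining these to the points of the other
colour on the line produces quadratically many lines.
-/

/-- The non-vertical line `y = slope * x + intercept`, coerced to the function whose graph it is. -/
@[ext]
structure NonverticalLine where
  slope : ℝ
  intercept : ℝ

namespace NonverticalLine

variable {l k : NonverticalLine} {a b m x : ℝ}

instance : FunLike NonverticalLine ℝ ℝ where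
  coe l x := l.slope * x + l.intercept
  coe_injective l k h := by
    have h0 := congrFun h 0
    have h1 := congrFun h 1
    ext <;> linarith

theorem apply_def (l : NonverticalLine) (x : ℝ) : l x = l.slope * x + l.intercept := rfl

theorem continuous (l : NonverticalLine) : Continuous l := by
  simp only [funext l.apply_def]
  fun_prop

theorem eq_of_slope_eq_of_apply_eq (hslope : l.slope = k.slope) (ha : l a = k a) : l = k :=
  NonverticalLine.ext hslope (by simpa [apply_def, hslope] using ha)

theorem eq_of_apply_eq_of_apply_eq (hab : a ≠ b) (ha : l a = k a) (hb : l b = k b) : l = k := by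
  have hslope : l.slope * (a - b) = k.slope * (a - b) := by
    rw [apply_def, apply_def] at ha hb
    linarith
  exact eq_of_slope_eq_of_apply_eq (mul_right_cancel₀ (sub_ne_zero.2 hab) hslope) ha

theorem lt_iff_slope_lt (hax : a < x) (ha : l a = k a) : l x < k x ↔ l.slope < k.slope := by
  rw [apply_def, apply_def] at *
  constructor <;> intro h <;> nlinarith

theorem le_of_lt_of_forall_ne (hmx : m < x) (hlt : l x < k x) (hne : ∀ y ∈ Ioo m x, l y ≠ k y) :
    l m ≤ k m := by
  by_contra! hm
  obtain ⟨y, hy, hyeq⟩ := isPreconnected_Icc.intermediate_value₂ (right_mem_Icc.2 hmx.le)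
    (left_mem_Icc.2 hmx.le) l.continuous.continuousOn k.continuous.continuousOn hlt.le hm.le
  refine hne y ⟨hy.1.lt_of_ne ?_, hy.2.lt_of_ne ?_⟩ hyeq
  · rintro rfl
    exact hm.ne' hyeq
  · rintro rfl
    exact hlt.ne hyeq

theorem exists_apply_eq_of_fst_ne {p q : ℝ × ℝ} (h : p.1 ≠ q.1) :
    ∃ l : NonverticalLine, p.2 = l p.1 ∧ q.2 = l q.1 := by
  have hsub : q.1 - p.1 ≠ 0 := sub_ne_zero.2 h.symm
  refine ⟨⟨(q.2 - p.2) / (q.1 - p.1), p.2 - (q.2 - p.2) / (q.1 - p.1) * p.1⟩, ?_, ?_⟩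
  · simp only [apply_def]
    ring
  · simp only [apply_def]
    field_simp
    ring

/-- The points of `V` incident on `l`. -/
def points (V : Finset (ℝ × ℝ)) (l : NonverticalLine) : Finset (ℝ × ℝ) := {p ∈ V | p.2 = l p.1}

@[simp]
theorem mem_points {V : Finset (ℝ × ℝ)} {p : ℝ × ℝ} : p ∈ points V l ↔ p ∈ V ∧ p.2 = l p.1 :=
  Finset.mem_filter

end NonverticalLine

/-- A segment of a non-vertical line, recorded as that line with the left and the right endpoint.
That the endpoints lie on the line is part of `IsEdge`. -/
@[ext]
structure LineEdge where
  line : NonverticalLine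
  left : ℝ × ℝ
  right : ℝ × ℝ

namespace LineEdge

/-- The projection to the `x`-axis of the relative interior of a segment. -/
def shadow (e : LineEdge) : Set ℝ := Ioo e.left.1 e.right.1

/-- Two segments cross if their relative interiors meet; in particular overlapping collinear
segments cross. -/
def Crosses (e f : LineEdge) : Prop := ∃ x ∈ e.shadow ∩ f.shadow, e.line x = f.line x

/-- The set of the two endpoints of a segment. -/
def endpoints (e : LineEdge) : Finset (ℝ × ℝ) := {e.left, e.right}

end LineEdge

open LineEdge NonverticalLine

/-- `e` joins two points of `V` that are consecutive among the points of `V` on the line of `e`. -/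
structure IsEdge (V : Finset (ℝ × ℝ)) (e : LineEdge) : Prop where
  left_mem : e.left ∈ V
  right_mem : e.right ∈ V
  left_lt_right : e.left.1 < e.right.1
  left_on : e.left.2 = e.line e.left.1
  right_on : e.right.2 = e.line e.right.1
  ne_of_mem_shadow : ∀ v ∈ V, v.1 ∈ e.shadow → v.2 ≠ e.line v.1

namespace IsEdge

variable {V W : Finset (ℝ × ℝ)} {e f : LineEdge} {x : ℝ}

theorem endpoints_subset (he : IsEdge V e) : e.endpoints ⊆ V :=
  Finset.insert_subset he.left_mem (Finset.singleton_subset_iff.2 he.right_mem)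

theorem card_endpoints (he : IsEdge V e) : e.endpoints.card = 2 :=
  Finset.card_pair fun h => he.left_lt_right.ne (congrArg Prod.fst h)

theorem of_subset (he : IsEdge V e) (hWV : W ⊆ V) (h : e.endpoints ⊆ W) : IsEdge W e where
  left_mem := h (by simp [endpoints])
  right_mem := h (by simp [endpoints])
  left_lt_right := he.left_lt_right
  left_on := he.left_on
  right_on := he.right_on
  ne_of_mem_shadow v hv := he.ne_of_mem_shadow v (hWV hv)

theorem left_le_left_of_line_eq (he : IsEdge V e) (hf : IsEdge V f) (hline : e.line = f.line)
    (hxe : x ∈ e.shadow) (hxf : x ∈ f.shadow) : e.left.1 ≤ f.left.1 := by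
  by_contra! hlt
  exact hf.ne_of_mem_shadow _ he.left_mem ⟨hlt, hxe.1.trans hxf.2⟩ (hline ▸ he.left_on)

theorem right_le_right_of_line_eq (he : IsEdge V e) (hf : IsEdge V f) (hline : e.line = f.line)
    (hxe : x ∈ e.shadow) (hxf : x ∈ f.shadow) : e.right.1 ≤ f.right.1 := by
  by_contra! hlt
  exact he.ne_of_mem_shadow _ hf.right_mem ⟨hxe.1.trans hxf.2, hlt⟩ (hline ▸ hf.right_on)

theorem eq_of_line_eq (hV : InjOn Prod.fst (V : Set (ℝ × ℝ))) (he : IsEdge V e) (hf : IsEdge V f)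
    (hline : e.line = f.line) (hxe : x ∈ e.shadow) (hxf : x ∈ f.shadow) : e = f := by
  refine LineEdge.ext hline (hV he.left_mem hf.left_mem ?_) (hV he.right_mem hf.right_mem ?_)
  · exact (he.left_le_left_of_line_eq hf hline hxe hxf).antisymm
      (hf.left_le_left_of_line_eq he hline.symm hxf hxe)
  · exact (he.right_le_right_of_line_eq hf hline hxe hxf).antisymm
      (hf.right_le_right_of_line_eq he hline.symm hxf hxe)

theorem disjoint_endpoints_of_crosses (hV : InjOn Prod.fst (V : Set (ℝ × ℝ))) (he : IsEdge V e)
    (hf : IsEdge V f) (hne : e ≠ f) (hcross : e.Crosses f) :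
    Disjoint e.endpoints f.endpoints := by
  obtain ⟨x, ⟨hxe, hxf⟩, hx⟩ := hcross
  have hline : e.line ≠ f.line := fun h => hne (he.eq_of_line_eq hV hf h hxe hxf)
  have hll : e.left ≠ f.left := fun h => hline <| eq_of_apply_eq_of_apply_eq hxe.1.ne
    (he.left_on.symm.trans (h ▸ hf.left_on)) hx
  have hrr : e.right ≠ f.right := fun h => hline <| eq_of_apply_eq_of_apply_eq hxe.2.ne'
    (he.right_on.symm.trans (h ▸ hf.right_on)) hx
  have hlr : e.left ≠ f.right := fun h => (hxe.1.trans hxf.2).ne (congrArg Prod.fst h)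
  have hrl : e.right ≠ f.left := fun h => (hxf.1.trans hxe.2).ne' (congrArg Prod.fst h)
  simp [endpoints, hll.symm, hrr.symm, hlr.symm, hrl.symm]

end IsEdge

/-- `E` is a set of pairwise non-crossing segments between points of `V`, where the points of `V`
have distinct first coordinates. -/
structure IsPlaneGraph (V : Finset (ℝ × ℝ)) (E : Finset LineEdge) : Prop where
  injOn_fst : InjOn Prod.fst (V : Set (ℝ × ℝ))
  isEdge : ∀ e ∈ E, IsEdge V e
  not_crosses : (E : Set LineEdge).Pairwise fun e f => ¬ e.Crosses f

/-- No edge of `E` with the same left endpoint as `e` is steeper than `e`. -/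
def IsTopmost (E : Finset LineEdge) (e : LineEdge) : Prop :=
  ∀ f ∈ E, f.left = e.left → f.line.slope ≤ e.line.slope

/-- Among the edges of `E` leaving the left endpoint of `e` to the right, `g` is the next one above
`e`. -/
structure IsNextAbove (E : Finset LineEdge) (e g : LineEdge) : Prop where
  mem : g ∈ E
  left_eq : g.left = e.left
  slope_lt : e.line.slope < g.line.slope
  slope_le : ∀ f ∈ E, f.left = e.left → e.line.slope < f.line.slope → g.line.slope ≤ f.line.slope

/-- The points of `V`, other than the apex, in the closed wedge between two segments `e` and `g`
with common left endpoint, `g` being the upper one, cut off where the shorter of the two ends. -/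
def wedge (V : Finset (ℝ × ℝ)) (e g : LineEdge) : Finset (ℝ × ℝ) :=
  {w ∈ V | w.1 ∈ Ioc e.left.1 (min e.right.1 g.right.1) ∧ w.2 ∈ Icc (e.line w.1) (g.line w.1)}

/-- `w` is the leftmost point in the wedge between `e` and the next edge `g` above it. In a plane
graph every edge that is not topmost is charged to such a `w`. -/
structure IsCharge (V : Finset (ℝ × ℝ)) (E : Finset LineEdge) (e g : LineEdge) (w : ℝ × ℝ) :
    Prop where
  edge_mem : e ∈ E
  next : IsNextAbove E e g
  mem_wedge : w ∈ wedge V e g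
  leftmost : ∀ c ∈ wedge V e g, w.1 ≤ c.1

section PlaneGraph

variable {V : Finset (ℝ × ℝ)} {E : Finset LineEdge} {e f g h : LineEdge} {w : ℝ × ℝ} {m x y : ℝ}

theorem IsPlaneGraph.apply_le_of_apply_lt (hG : IsPlaneGraph V E) (he : e ∈ E) (hf : f ∈ E)
    (hem : e.left.1 ≤ m) (hfm : f.left.1 ≤ m) (hmx : m < x) (hxe : x ≤ e.right.1)
    (hxf : x ≤ f.right.1) (hlt : e.line x < f.line x) : e.line m ≤ f.line m :=
  le_of_lt_of_forall_ne hmx hlt fun z hz heq =>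
    hG.not_crosses he hf (by rintro rfl; exact hlt.ne rfl)
      ⟨z, ⟨⟨hem.trans_lt hz.1, hz.2.trans_le hxe⟩, ⟨hfm.trans_lt hz.1, hz.2.trans_le hxf⟩⟩, heq⟩

theorem exists_isNextAbove (he : ¬ IsTopmost E e) : ∃ g, IsNextAbove E e g := by
  classical
  simp only [IsTopmost, not_forall, not_le] at he
  obtain ⟨f, hf, hleft, hslope⟩ := he
  obtain ⟨g, hg, hmin⟩ := Finset.exists_min_image
    {f ∈ E | f.left = e.left ∧ e.line.slope < f.line.slope} (fun f => f.line.slope)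
    ⟨f, Finset.mem_filter.2 ⟨hf, hleft, hslope⟩⟩
  obtain ⟨hgE, hgleft, hgslope⟩ := Finset.mem_filter.1 hg
  exact ⟨g, hgE, hgleft, hgslope, fun f hf hleft hslope =>
    hmin f (Finset.mem_filter.2 ⟨hf, hleft, hslope⟩)⟩

theorem IsNextAbove.apply_left_eq (hG : IsPlaneGraph V E) (he : e ∈ E) (hg : IsNextAbove E e g) :
    e.line e.left.1 = g.line e.left.1 := by
  have hleft := (hG.isEdge g hg.mem).left_on
  rw [hg.left_eq] at hleft
  exact (hG.isEdge e he).left_on.symm.trans hleft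

theorem IsNextAbove.lt (hG : IsPlaneGraph V E) (he : e ∈ E) (hg : IsNextAbove E e g)
    (hx : e.left.1 < x) : e.line x < g.line x :=
  (lt_iff_slope_lt hx (hg.apply_left_eq hG he)).2 hg.slope_lt

theorem IsNextAbove.wedge_nonempty (hG : IsPlaneGraph V E) (he : e ∈ E) (hg : IsNextAbove E e g) :
    (wedge V e g).Nonempty := by
  have hedge := hG.isEdge e he
  have hgedge := hG.isEdge g hg.mem
  have hglt : e.left.1 < g.right.1 := hg.left_eq ▸ hgedge.left_lt_right
  rcases le_total e.right.1 g.right.1 with hle | hle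
  · refine ⟨e.right, Finset.mem_filter.2 ⟨hedge.right_mem,
      ⟨hedge.left_lt_right, le_min le_rfl hle⟩, hedge.right_on.ge, ?_⟩⟩
    exact hedge.right_on.trans_le (hg.lt hG he hedge.left_lt_right).le
  · refine ⟨g.right, Finset.mem_filter.2 ⟨hgedge.right_mem,
      ⟨hglt, le_min hle le_rfl⟩, ?_, hgedge.right_on.le⟩⟩
    exact (hg.lt hG he hglt).le.trans hgedge.right_on.ge

theorem exists_isCharge (hG : IsPlaneGraph V E) (he : e ∈ E) (hetop : ¬ IsTopmost E e) :
    ∃ g w, IsCharge V E e g w := by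
  obtain ⟨g, hg⟩ := exists_isNextAbove hetop
  obtain ⟨w, hw, hmin⟩ := Finset.exists_min_image _ Prod.fst (hg.wedge_nonempty hG he)
  exact ⟨g, w, he, hg, hw, hmin⟩

namespace IsCharge

theorem vertex_mem (hw : IsCharge V E e g w) : w ∈ V := (Finset.mem_filter.1 hw.mem_wedge).1

theorem left_lt (hw : IsCharge V E e g w) : e.left.1 < w.1 :=
  (Finset.mem_filter.1 hw.mem_wedge).2.1.1

theorem le_right (hw : IsCharge V E e g w) : w.1 ≤ e.right.1 :=
  (Finset.mem_filter.1 hw.mem_wedge).2.1.2.trans (min_le_left _ _)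

theorem le_next_right (hw : IsCharge V E e g w) : w.1 ≤ g.right.1 :=
  (Finset.mem_filter.1 hw.mem_wedge).2.1.2.trans (min_le_right _ _)

theorem apply_le (hw : IsCharge V E e g w) : e.line w.1 ≤ w.2 :=
  (Finset.mem_filter.1 hw.mem_wedge).2.2.1

theorem le_next_apply (hw : IsCharge V E e g w) : w.2 ≤ g.line w.1 :=
  (Finset.mem_filter.1 hw.mem_wedge).2.2.2

theorem mem_shadow_of_ne (hG : IsPlaneGraph V E) (hw : IsCharge V E e g w) (hne : w ≠ e.right) :
    w.1 ∈ e.shadow :=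
  ⟨hw.left_lt, hw.le_right.lt_of_ne fun h =>
    hne (hG.injOn_fst hw.vertex_mem (hG.isEdge e hw.edge_mem).right_mem h)⟩

theorem apply_lt_of_ne (hG : IsPlaneGraph V E) (hw : IsCharge V E e g w) (hne : w ≠ e.right) :
    e.line w.1 < w.2 :=
  hw.apply_le.lt_of_ne ((hG.isEdge e hw.edge_mem).ne_of_mem_shadow w hw.vertex_mem
    (hw.mem_shadow_of_ne hG hne)).symm

-- An edge inside the wedge would have to enter it through a vertex left of `w`, through the apex,
-- or by running over the apex.
theorem next_le_of_lt (hG : IsPlaneGraph V E) (hw : IsCharge V E e g w) (hf : f ∈ E)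
    (hwf : w.1 ∈ Ioc f.left.1 f.right.1) (hx : x ∈ Ioc (max e.left.1 f.left.1) w.1)
    (hy : y ∈ Ioc (max e.left.1 f.left.1) w.1) (hef : e.line x < f.line x) :
    g.line y ≤ f.line y := by
  by_contra! hfg
  have he := hG.isEdge e hw.edge_mem
  have hfedge := hG.isEdge f hf
  set m := max e.left.1 f.left.1 with hm
  have hef_m : e.line m ≤ f.line m := hG.apply_le_of_apply_lt hw.edge_mem hf (le_max_left _ _)
    (le_max_right _ _) hx.1 (hx.2.trans hw.le_right) (hx.2.trans hwf.2) hef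
  have hfg_m : f.line m ≤ g.line m := hG.apply_le_of_apply_lt hf hw.next.mem (le_max_right _ _)
    (hw.next.left_eq ▸ le_max_left _ _) hy.1 (hy.2.trans hwf.2) (hy.2.trans hw.le_next_right) hfg
  have heg := hw.next.apply_left_eq hG hw.edge_mem
  rcases lt_trichotomy e.left.1 f.left.1 with hlt | heq | hgt
  · rw [hm, max_eq_right hlt.le, ← hfedge.left_on] at hef_m hfg_m
    refine (hw.leftmost f.left (Finset.mem_filter.2 ⟨hfedge.left_mem, ⟨hlt, ?_⟩, hef_m,
      hfg_m⟩)).not_gt hwf.1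
    exact hwf.1.le.trans (le_min hw.le_right hw.le_next_right)
  · have hleft : e.left = f.left := hG.injOn_fst he.left_mem hfedge.left_mem heq
    have hmx : m = e.left.1 := by rw [hm, heq, max_self]
    have hefleft : e.line e.left.1 = f.line e.left.1 :=
      he.left_on.symm.trans (hleft ▸ hfedge.left_on)
    have hslope_ef := (lt_iff_slope_lt (hmx ▸ hx.1) hefleft).1 hef
    have hslope_fg := (lt_iff_slope_lt (hmx ▸ hy.1) (hefleft.symm.trans heg)).1 hfg
    exact (hw.next.slope_le f hf hleft.symm hslope_ef).not_gt hslope_fg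
  · rw [hm, max_eq_left hgt.le] at hef_m hfg_m
    refine hfedge.ne_of_mem_shadow e.left he.left_mem ⟨hgt, hw.left_lt.trans_le hwf.2⟩ ?_
    exact he.left_on.trans (hef_m.antisymm (hfg_m.trans heg.ge))

theorem eq_of_right_eq (hG : IsPlaneGraph V E) (he : IsCharge V E e g e.right)
    (hf : IsCharge V E f h f.right) (hright : e.right = f.right) : e = f := by
  by_contra hne
  obtain ⟨x, hx, hxr⟩ := exists_between (max_lt he.left_lt (hright ▸ hf.left_lt))
  wlog hlt : e.line x < f.line x generalizing e f g h
  · obtain ⟨hex, hfx⟩ := max_lt_iff.1 hx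
    refine this hf he hright.symm (Ne.symm hne) (max_comm e.left.1 f.left.1 ▸ hx) (hright ▸ hxr)
      ((not_lt.1 hlt).lt_of_ne fun heq => ?_)
    exact hG.not_crosses he.edge_mem hf.edge_mem hne
      ⟨x, ⟨⟨hex, hxr⟩, ⟨hfx, hright ▸ hxr⟩⟩, heq.symm⟩
  have happly : f.line e.right.1 = e.line e.right.1 :=
    (hright ▸ (hG.isEdge f hf.edge_mem).right_on).symm.trans (hG.isEdge e he.edge_mem).right_on
  refine (he.next.lt hG he.edge_mem he.left_lt).not_ge (happly ▸ ?_)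
  exact he.next_le_of_lt hG hf.edge_mem ⟨hright ▸ hf.left_lt, hright ▸ le_rfl⟩ ⟨hx, hxr.le⟩
    ⟨hx.trans hxr, le_rfl⟩ hlt

theorem eq_of_ne_right (hG : IsPlaneGraph V E) (he : IsCharge V E e g w)
    (hf : IsCharge V E f h w) (hwe : w ≠ e.right) (hwf : w ≠ f.right) : e = f := by
  by_contra hne
  wlog hlt : e.line w.1 < f.line w.1 generalizing e f g h
  · refine this hf he hwf hwe (Ne.symm hne) ((not_lt.1 hlt).lt_of_ne fun heq => ?_)
    exact hG.not_crosses he.edge_mem hf.edge_mem hne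
      ⟨w.1, ⟨he.mem_shadow_of_ne hG hwe, hf.mem_shadow_of_ne hG hwf⟩, heq.symm⟩
  have hmem : w.1 ∈ Ioc (max e.left.1 f.left.1) w.1 := ⟨max_lt he.left_lt hf.left_lt, le_rfl⟩
  have hgf := he.next_le_of_lt hG hf.edge_mem ⟨hf.left_lt, hf.le_right⟩ hmem hmem hlt
  exact (hf.apply_lt_of_ne hG hwf).not_ge (he.le_next_apply.trans hgf)

end IsCharge

theorem IsTopmost.eq_of_left_eq (hG : IsPlaneGraph V E) (he : e ∈ E) (hf : f ∈ E)
    (hetop : IsTopmost E e) (hftop : IsTopmost E f) (hleft : e.left = f.left) : e = f := by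
  have heedge := hG.isEdge e he
  have hfedge := hG.isEdge f hf
  have hline : e.line = f.line := eq_of_slope_eq_of_apply_eq
    ((hftop e he hleft).antisymm (hetop f hf hleft.symm))
    (heedge.left_on.symm.trans (hleft ▸ hfedge.left_on))
  obtain ⟨x, hx, hxr⟩ := exists_between
    (lt_min heedge.left_lt_right (hleft ▸ hfedge.left_lt_right))
  obtain ⟨hxe, hxf⟩ := lt_min_iff.1 hxr
  exact heedge.eq_of_line_eq hG.injOn_fst hfedge hline ⟨hx, hxe⟩ ⟨hleft ▸ hx, hxf⟩

open Classical in
theorem IsPlaneGraph.card_isTopmost_le (hG : IsPlaneGraph V E) :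
    {e ∈ E | IsTopmost E e}.card ≤ V.card := by
  refine Finset.card_le_card_of_injOn LineEdge.left
    (fun e he => (hG.isEdge e (Finset.mem_filter.1 he).1).left_mem) fun e he f hf hleft => ?_
  obtain ⟨heE, hetop⟩ := Finset.mem_filter.1 he
  obtain ⟨hfE, hftop⟩ := Finset.mem_filter.1 hf
  exact hetop.eq_of_left_eq hG heE hfE hftop hleft

open Classical in
theorem IsPlaneGraph.card_isCharge_right_le (hG : IsPlaneGraph V E) :
    {e ∈ E | ∃ g, IsCharge V E e g e.right}.card ≤ V.card := by
  refine Finset.card_le_card_of_injOn LineEdge.right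
    (fun e he => (hG.isEdge e (Finset.mem_filter.1 he).1).right_mem) fun e he f hf hright => ?_
  obtain ⟨-, g, hg⟩ := Finset.mem_filter.1 he
  obtain ⟨-, h, hh⟩ := Finset.mem_filter.1 hf
  exact hg.eq_of_right_eq hG hh hright

open Classical in
theorem IsPlaneGraph.card_isCharge_ne_right_le (hG : IsPlaneGraph V E) :
    {e ∈ E | ∃ g w, IsCharge V E e g w ∧ w ≠ e.right}.card ≤ V.card := by
  refine Finset.card_le_card_of_forall_subsingleton
    (fun e w => ∃ g, IsCharge V E e g w ∧ w ≠ e.right) (fun e he => ?_) fun w _ e he f hf => ?_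
  · obtain ⟨-, g, w, hg, hne⟩ := Finset.mem_filter.1 he
    exact ⟨w, hg.vertex_mem, g, hg, hne⟩
  · obtain ⟨-, g, hg, hwe⟩ := he
    obtain ⟨-, h, hh, hwf⟩ := hf
    exact hg.eq_of_ne_right hG hh hwe hwf

theorem IsPlaneGraph.card_le (hG : IsPlaneGraph V E) : E.card ≤ 3 * V.card := by
  classical
  have hcover : E ⊆ {e ∈ E | IsTopmost E e} ∪ {e ∈ E | ∃ g, IsCharge V E e g e.right} ∪
      {e ∈ E | ∃ g w, IsCharge V E e g w ∧ w ≠ e.right} := fun e he => by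
    simp only [Finset.mem_union, Finset.mem_filter, he, true_and]
    by_cases hetop : IsTopmost E e
    · exact .inl (.inl hetop)
    obtain ⟨g, w, hw⟩ := exists_isCharge hG he hetop
    by_cases hwe : w = e.right
    · exact .inl (.inr ⟨g, hwe ▸ hw⟩)
    · exact .inr ⟨g, w, hw, hwe⟩
  have hcard := Finset.card_le_card hcover
  have hunion₁ := Finset.card_union_le
    ({e ∈ E | IsTopmost E e} ∪ {e ∈ E | ∃ g, IsCharge V E e g e.right})
    {e ∈ E | ∃ g w, IsCharge V E e g w ∧ w ≠ e.right}
  have hunion₂ := Finset.card_union_le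
    {e ∈ E | IsTopmost E e} {e ∈ E | ∃ g, IsCharge V E e g e.right}
  linarith [hG.card_isTopmost_le, hG.card_isCharge_right_le, hG.card_isCharge_ne_right_le]

end PlaneGraph

section CrossingLemma

variable {V : Finset (ℝ × ℝ)} {E F : Finset LineEdge}

open Classical in
/-- The ordered pairs of distinct crossing segments of `E`; each crossing is counted twice. -/
def crossings (E : Finset LineEdge) : Finset (LineEdge × LineEdge) :=
  {q ∈ E.offDiag | q.1.Crosses q.2}

theorem mem_crossings {q : LineEdge × LineEdge} :
    q ∈ crossings E ↔ (q.1 ∈ E ∧ q.2 ∈ E ∧ q.1 ≠ q.2) ∧ q.1.Crosses q.2 := by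
  simp [crossings]

theorem crossings_mono (hFE : F ⊆ E) : crossings F ⊆ crossings E := fun _ hq =>
  have ⟨⟨h₁, h₂, hne⟩, hcross⟩ := mem_crossings.1 hq
  mem_crossings.2 ⟨⟨hFE h₁, hFE h₂, hne⟩, hcross⟩

theorem card_le_three_mul_add_card_crossings (hV : InjOn Prod.fst (V : Set (ℝ × ℝ)))
    (hE : ∀ e ∈ E, IsEdge V e) : E.card ≤ 3 * V.card + (crossings E).card := by
  classical
  induction E using Finset.strongInduction with
  | H E ih =>
    by_cases hplane : (E : Set LineEdge).Pairwise fun e f => ¬ e.Crosses f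
    · exact (IsPlaneGraph.card_le ⟨hV, hE, hplane⟩).trans (Nat.le_add_right _ _)
    · obtain ⟨e, he, f, hf, hef, hcross⟩ :
          ∃ e ∈ E, ∃ f ∈ E, e ≠ f ∧ e.Crosses f := by
        simpa [Set.Pairwise] using hplane
      have hsub : crossings (E.erase e) ⊂ crossings E :=
        (Finset.ssubset_iff_of_subset (crossings_mono (E.erase_subset e))).2
          ⟨(e, f), by simp [mem_crossings, he, hf, hef, hcross], by simp [mem_crossings]⟩
      have hlt := Finset.card_lt_card hsub
      have hle := ih _ (Finset.erase_ssubset he) fun g hg => hE g (Finset.mem_of_mem_erase hg)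
      have hcard := Finset.card_erase_add_one he
      omega

end CrossingLemma

section Sampling

variable {α ι R : Type*} [CommRing R] {V A : Finset α}

/-- The probability that a random subset of `V`, containing each element independently with
probability `p`, equals `S`; meaningful for `S ⊆ V`. -/
def bernoulliWeight (V : Finset α) (p : R) (S : Finset α) : R :=
  p ^ S.card * (1 - p) ^ (V.card - S.card)

theorem bernoulliWeight_nonneg {p : ℝ} (hp₀ : 0 ≤ p) (hp₁ : p ≤ 1) (S : Finset α) :
    0 ≤ bernoulliWeight V p S :=
  mul_nonneg (pow_nonneg hp₀ _) (pow_nonneg (sub_nonneg.2 hp₁) _)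

theorem bernoulliWeight_union [DecidableEq α] (hAV : A ⊆ V) (p : R) {T : Finset α}
    (hT : T ⊆ V \ A) :
    bernoulliWeight V p (A ∪ T) = p ^ A.card * bernoulliWeight (V \ A) p T := by
  have hdisj : Disjoint A T := Finset.disjoint_sdiff.mono_right hT
  rw [bernoulliWeight, bernoulliWeight, Finset.card_union_of_disjoint hdisj,
    Finset.card_sdiff_of_subset hAV, pow_add, mul_assoc, Nat.sub_add_eq]

theorem sum_bernoulliWeight_Icc [DecidableEq α] (hAV : A ⊆ V) (p : R) :
    ∑ S ∈ Finset.Icc A V, bernoulliWeight V p S = p ^ A.card := by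
  have hleftInv : LeftInvOn (· \ A) (A ∪ ·) ((V \ A).powerset : Set (Finset α)) := fun T hT =>
    Finset.union_sdiff_cancel_left (Finset.disjoint_sdiff.mono_right (Finset.mem_powerset.1 hT))
  calc ∑ S ∈ Finset.Icc A V, bernoulliWeight V p S
      = ∑ T ∈ (V \ A).powerset, bernoulliWeight V p (A ∪ T) := by
        rw [Finset.Icc_eq_image_powerset hAV, Finset.sum_image hleftInv.injOn]
    _ = p ^ A.card * ∑ T ∈ (V \ A).powerset, bernoulliWeight (V \ A) p T := by
        rw [Finset.mul_sum]
        exact Finset.sum_congr rfl fun T hT =>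
          bernoulliWeight_union hAV p (Finset.mem_powerset.1 hT)
    _ = p ^ A.card := by
        simp only [bernoulliWeight, Finset.sum_pow_mul_eq_add_pow, add_sub_cancel, one_pow,
          mul_one]

theorem sum_bernoulliWeight_mul_card_filter_subset [DecidableEq α] {I : Finset ι}
    {A : ι → Finset α} {j : ℕ} (hA : ∀ i ∈ I, A i ⊆ V) (hcard : ∀ i ∈ I, (A i).card = j) (p : R) :
    ∑ S ∈ V.powerset, bernoulliWeight V p S * ({i ∈ I | A i ⊆ S}.card : R) = I.card * p ^ j := by
  calc ∑ S ∈ V.powerset, bernoulliWeight V p S * ({i ∈ I | A i ⊆ S}.card : R)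
      = ∑ S ∈ V.powerset, ∑ i ∈ I, if A i ⊆ S then bernoulliWeight V p S else 0 := by
        simp only [← Finset.sum_filter, Finset.sum_const, nsmul_eq_mul, mul_comm]
    _ = ∑ i ∈ I, ∑ S ∈ Finset.Icc (A i) V, bernoulliWeight V p S := by
        rw [Finset.sum_comm]
        simp only [← Finset.sum_filter, Finset.Icc_eq_filter_powerset]
    _ = ∑ _i ∈ I, p ^ j :=
        Finset.sum_congr rfl fun i hi => by rw [sum_bernoulliWeight_Icc (hA i hi), hcard i hi]
    _ = I.card * p ^ j := by rw [Finset.sum_const, nsmul_eq_mul]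

end Sampling

section SzemerediTrotter

variable {V : Finset (ℝ × ℝ)} {E : Finset LineEdge} {L : Finset NonverticalLine}

open Classical in
theorem card_filter_endpoints_subset_le {S : Finset (ℝ × ℝ)}
    (hV : InjOn Prod.fst (V : Set (ℝ × ℝ))) (hE : ∀ e ∈ E, IsEdge V e) (hSV : S ⊆ V) :
    {e ∈ E | e.endpoints ⊆ S}.card ≤
      3 * {v ∈ V | {v} ⊆ S}.card +
        {q ∈ crossings E | q.1.endpoints ∪ q.2.endpoints ⊆ S}.card := by
  have hS : {v ∈ V | {v} ⊆ S} = S := by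
    simp only [Finset.singleton_subset_iff, Finset.filter_mem_eq_inter,
      Finset.inter_eq_right.2 hSV]
  have hcrossings : crossings {e ∈ E | e.endpoints ⊆ S} ⊆
      {q ∈ crossings E | q.1.endpoints ∪ q.2.endpoints ⊆ S} := fun q hq => by
    simp only [mem_crossings, Finset.mem_filter, Finset.union_subset_iff] at hq ⊢
    tauto
  have hle := card_le_three_mul_add_card_crossings (hV.mono (Finset.coe_subset.2 hSV))
    (E := {e ∈ E | e.endpoints ⊆ S}) fun e he =>
      have ⟨heE, heS⟩ := Finset.mem_filter.1 he
      (hE e heE).of_subset hSV heS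
  rw [hS]
  exact hle.trans (Nat.add_le_add_left (Finset.card_le_card hcrossings) _)

/-- The crossing lemma, amplified by taking expectations over a random subset of `V`. -/
theorem card_mul_sq_le_add_card_crossings_mul {p : ℝ} (hV : InjOn Prod.fst (V : Set (ℝ × ℝ)))
    (hE : ∀ e ∈ E, IsEdge V e) (hp₀ : 0 ≤ p) (hp₁ : p ≤ 1) :
    E.card * p ^ 2 ≤ 3 * (V.card * p) + (crossings E).card * p ^ 4 := by
  classical
  have hcrossing : ∀ q ∈ crossings E, IsEdge V q.1 ∧ IsEdge V q.2 ∧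
      Disjoint q.1.endpoints q.2.endpoints := fun q hq =>
    have ⟨⟨h₁, h₂, hne⟩, hcross⟩ := mem_crossings.1 hq
    ⟨hE _ h₁, hE _ h₂, (hE _ h₁).disjoint_endpoints_of_crosses hV (hE _ h₂) hne hcross⟩
  have hedges := sum_bernoulliWeight_mul_card_filter_subset (A := endpoints)
    (fun e he => (hE e he).endpoints_subset) (fun e he => (hE e he).card_endpoints) p
  have hpoints := sum_bernoulliWeight_mul_card_filter_subset (V := V) (I := V)
    (A := fun v => {v}) (fun v hv => Finset.singleton_subset_iff.2 hv)
    (fun v _ => Finset.card_singleton v) p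
  have hcrossings := sum_bernoulliWeight_mul_card_filter_subset (V := V) (I := crossings E)
    (A := fun q => q.1.endpoints ∪ q.2.endpoints) (j := 4)
    (fun q hq => have ⟨h₁, h₂, _⟩ := hcrossing q hq
      Finset.union_subset h₁.endpoints_subset h₂.endpoints_subset)
    (fun q hq => have ⟨h₁, h₂, hdisj⟩ := hcrossing q hq
      by rw [Finset.card_union_of_disjoint hdisj, h₁.card_endpoints, h₂.card_endpoints]) p
  rw [pow_one] at hpoints
  rw [← hedges, ← hpoints, ← hcrossings, Finset.mul_sum, ← Finset.sum_add_distrib]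
  refine Finset.sum_le_sum fun S hS => ?_
  have hle : ({e ∈ E | e.endpoints ⊆ S}.card : ℝ) ≤ 3 * {v ∈ V | {v} ⊆ S}.card +
      {q ∈ crossings E | q.1.endpoints ∪ q.2.endpoints ⊆ S}.card := by
    exact_mod_cast card_filter_endpoints_subset_le hV hE (Finset.mem_powerset.1 hS)
  have hmul := mul_le_mul_of_nonneg_left hle (bernoulliWeight_nonneg (V := V) hp₀ hp₁ S)
  linarith

open Classical in
/-- The segments into which the points of `V` cut the lines of `L`, without the unbounded pieces. -/
def edges (V : Finset (ℝ × ℝ)) (L : Finset NonverticalLine) : Finset LineEdge :=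
  {e ∈ (L ×ˢ V ×ˢ V).image fun x => ⟨x.1, x.2.1, x.2.2⟩ | IsEdge V e}

theorem mem_edges {e : LineEdge} : e ∈ edges V L ↔ e.line ∈ L ∧ IsEdge V e := by
  classical
  simp only [edges, Finset.mem_filter, Finset.mem_image, Finset.mem_product, and_congr_left_iff]
  refine fun he => ⟨?_, fun hl => ⟨(e.line, e.left, e.right), ⟨hl, he.left_mem, he.right_mem⟩, rfl⟩⟩
  rintro ⟨x, hx, rfl⟩
  exact hx.1

theorem card_crossings_edges_le (hV : InjOn Prod.fst (V : Set (ℝ × ℝ))) :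
    (crossings (edges V L)).card ≤ L.card ^ 2 := by
  rw [sq, ← Finset.card_product]
  refine Finset.card_le_card_of_injOn (fun q => (q.1.line, q.2.line)) (fun q hq => ?_) ?_
  · have ⟨⟨h₁, h₂, _⟩, _⟩ := mem_crossings.1 hq
    exact Finset.mem_product.2 ⟨(mem_edges.1 h₁).1, (mem_edges.1 h₂).1⟩
  · intro q hq r hr hqr
    obtain ⟨⟨hq₁, hq₂, hne⟩, x, ⟨hx₁, hx₂⟩, hx⟩ := mem_crossings.1 hq
    obtain ⟨⟨hr₁, hr₂, -⟩, y, ⟨hy₁, hy₂⟩, hy⟩ := mem_crossings.1 hr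
    obtain ⟨hline₁, hline₂⟩ : q.1.line = r.1.line ∧ q.2.line = r.2.line := Prod.mk.inj hqr
    have hunique {e f : LineEdge} (he : e ∈ edges V L) (hf : f ∈ edges V L) {z : ℝ}
        (hline : e.line = f.line) (hze : z ∈ e.shadow) (hzf : z ∈ f.shadow) : e = f :=
      (mem_edges.1 he).2.eq_of_line_eq hV (mem_edges.1 hf).2 hline hze hzf
    have hxy : x = y := by
      by_contra hxy
      rw [← hline₁, ← hline₂] at hy
      exact hne (hunique hq₁ hq₂ (eq_of_apply_eq_of_apply_eq hxy hx hy) hx₁ hx₂)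
    subst hxy
    exact Prod.ext (hunique hq₁ hr₁ hline₁ hx₁ hy₁) (hunique hq₂ hr₂ hline₂ hx₂ hy₂)

theorem exists_isEdge_of_lt {l : NonverticalLine} {p m : ℝ × ℝ} (hp : p ∈ points V l)
    (hm : m ∈ points V l) (hlt : p.1 < m.1) : ∃ q, IsEdge V ⟨l, p, q⟩ := by
  obtain ⟨q, hq, hqmin⟩ := Finset.exists_min_image {q ∈ points V l | p.1 < q.1} Prod.fst
    ⟨m, Finset.mem_filter.2 ⟨hm, hlt⟩⟩
  simp only [Finset.mem_filter, mem_points] at hp hq hqmin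
  refine ⟨q, hp.1, hq.1.1, hq.2, hp.2, hq.1.2, fun v hv hshadow hvl => ?_⟩
  exact (hqmin v ⟨⟨hv, hvl⟩, hshadow.1⟩).not_gt hshadow.2

open Classical in
theorem card_points_le_card_edges_add_one (hV : InjOn Prod.fst (V : Set (ℝ × ℝ)))
    {l : NonverticalLine} (hl : l ∈ L) :
    (points V l).card ≤ {e ∈ edges V L | e.line = l}.card + 1 := by
  rcases (points V l).eq_empty_or_nonempty with hempty | hne
  · simp [hempty]
  obtain ⟨m, hm, hmmax⟩ := Finset.exists_max_image (points V l) Prod.fst hne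
  rw [← Finset.card_erase_add_one hm, Nat.add_le_add_iff_right]
  refine Finset.card_le_card_of_surjOn LineEdge.left fun p hp => ?_
  obtain ⟨hpm, hp⟩ := Finset.mem_erase.1 hp
  have hlt : p.1 < m.1 := (hmmax p hp).lt_of_ne fun h =>
    hpm (hV (mem_points.1 hp).1 (mem_points.1 hm).1 h)
  obtain ⟨q, hq⟩ := exists_isEdge_of_lt hp hm hlt
  exact ⟨⟨l, p, q⟩, by simpa [mem_edges] using ⟨hl, hq⟩, rfl⟩

theorem sum_card_points_le_card_edges (hV : InjOn Prod.fst (V : Set (ℝ × ℝ))) :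
    ∑ l ∈ L, (points V l).card ≤ (edges V L).card + L.card := by
  classical
  calc ∑ l ∈ L, (points V l).card
      ≤ ∑ l ∈ L, ({e ∈ edges V L | e.line = l}.card + 1) :=
        Finset.sum_le_sum fun l hl => card_points_le_card_edges_add_one hV hl
    _ = (edges V L).card + L.card := by
        rw [Finset.sum_add_distrib, Finset.sum_const, smul_eq_mul, mul_one,
          ← Finset.card_eq_sum_card_fiberwise fun e he => (mem_edges.1 he).1]

/-- The Szemerédi–Trotter bound, with the sampling probability `κ⁻¹` left as a parameter. -/
theorem szemerediTrotter (hV : InjOn Prod.fst (V : Set (ℝ × ℝ))) (L : Finset NonverticalLine)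
    {κ : ℝ} (hκ : 1 ≤ κ) :
    ∑ l ∈ L, ((points V l).card : ℝ) ≤ L.card + 3 * V.card * κ + (L.card : ℝ) ^ 2 / κ ^ 2 := by
  have hκ₀ : 0 < κ := one_pos.trans_le hκ
  have hincidences : ∑ l ∈ L, ((points V l).card : ℝ) ≤ (edges V L).card + L.card := by
    exact_mod_cast sum_card_points_le_card_edges hV
  have hcrossings : ((crossings (edges V L)).card : ℝ) ≤ (L.card : ℝ) ^ 2 := by
    exact_mod_cast card_crossings_edges_le hV
  have hedges : ((edges V L).card : ℝ) ≤ 3 * V.card * κ + (L.card : ℝ) ^ 2 / κ ^ 2 := by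
    calc ((edges V L).card : ℝ)
        = (edges V L).card * κ⁻¹ ^ 2 * κ ^ 2 := by field_simp
      _ ≤ (3 * (V.card * κ⁻¹) + (crossings (edges V L)).card * κ⁻¹ ^ 4) * κ ^ 2 := by
        gcongr
        exact card_mul_sq_le_add_card_crossings_mul hV (fun e he => (mem_edges.1 he).2)
          (inv_nonneg.2 hκ₀.le) (inv_le_one_of_one_le₀ hκ)
      _ = 3 * V.card * κ + (crossings (edges V L)).card / κ ^ 2 := by field_simp
      _ ≤ 3 * V.card * κ + (L.card : ℝ) ^ 2 / κ ^ 2 := by gcongr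
  linarith

end SzemerediTrotter

section RichLines

variable {V : Finset (ℝ × ℝ)} {L : Finset NonverticalLine}

theorem card_mul_le_of_forall_le_card_points (hV : InjOn Prod.fst (V : Set (ℝ × ℝ))) {t κ : ℝ}
    (hκ : 1 ≤ κ) (htwo : ∀ l ∈ L, 2 ≤ (points V l).card) (hL : ∀ l ∈ L, t ≤ (points V l).card) :
    L.card * t ≤ 6 * V.card * κ + 2 * ((L.card : ℝ) ^ 2 / κ ^ 2) := by
  have htwo' : L.card * (2 : ℝ) ≤ ∑ l ∈ L, ((points V l).card : ℝ) := by
    rw [← nsmul_eq_mul]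
    exact Finset.card_nsmul_le_sum _ _ _ fun l hl => by exact_mod_cast htwo l hl
  have hsum : L.card * t ≤ ∑ l ∈ L, ((points V l).card : ℝ) := by
    rw [← nsmul_eq_mul]
    exact Finset.card_nsmul_le_sum _ _ _ hL
  linarith [szemerediTrotter hV L hκ]

theorem card_le_of_forall_le_card_points (hV : InjOn Prod.fst (V : Set (ℝ × ℝ))) {t : ℝ}
    (ht : 0 < t) (htwo : ∀ l ∈ L, 2 ≤ (points V l).card)
    (hL : ∀ l ∈ L, t ≤ (points V l).card) :
    (L.card : ℝ) ≤ 576 * (V.card : ℝ) ^ 2 / t ^ 3 + 12 * V.card / t := by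
  have hbound {κ : ℝ} (hκ : 1 ≤ κ) := card_mul_le_of_forall_le_card_points hV hκ htwo hL
  rcases le_total (4 * (L.card : ℝ)) t with hfew | hmany
  · have hle : (L.card : ℝ) ≤ 12 * V.card / t := by
      rw [le_div_iff₀ ht]
      nlinarith [hbound le_rfl, (Nat.cast_nonneg L.card : (0 : ℝ) ≤ L.card)]
    exact hle.trans (le_add_of_nonneg_left (by positivity))
  · have hpos : (0 : ℝ) < L.card := by linarith
    -- The choice `κ² = 4 |L| / t` makes the quadratic term half of the left-hand side.
    have hle := hbound (Real.one_le_sqrt.2 ((one_le_div ht).2 hmany))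
    have hsq : √(4 * L.card / t) ^ 2 = 4 * L.card / t := Real.sq_sqrt (by positivity)
    have hhalf : 2 * ((L.card : ℝ) ^ 2 / (4 * L.card / t)) = L.card * t / 2 := by
      field_simp
      norm_num
    rw [hsq, hhalf] at hle
    have hsquared : (L.card * t) ^ 2 ≤ 144 * (V.card : ℝ) ^ 2 * (4 * L.card / t) := by
      rw [← hsq]
      nlinarith [mul_self_le_mul_self (by positivity)
        (show L.card * t ≤ 12 * V.card * √(4 * L.card / t) by linarith)]
    have hcubic : (L.card : ℝ) ≤ 576 * (V.card : ℝ) ^ 2 / t ^ 3 := by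
      rw [le_div_iff₀ (by positivity)]
      refine le_of_mul_le_mul_left ?_ hpos
      calc L.card * (L.card * t ^ 3) = (L.card * t) ^ 2 * t := by ring
        _ ≤ 144 * (V.card : ℝ) ^ 2 * (4 * L.card / t) * t := by gcongr
        _ = L.card * (576 * (V.card : ℝ) ^ 2) := by field_simp; ring
    exact hcubic.trans (le_add_of_nonneg_right (by positivity))

theorem two_mul_sum_Ioc_id_add {d w : ℕ} (hdw : d ≤ w) :
    2 * ∑ t ∈ Finset.Ioc d w, t + d * (d + 1) = w * (w + 1) := by
  induction w, hdw using Nat.le_induction with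
  | base => simp
  | succ w hdw ih =>
    rw [Finset.sum_Ioc_succ_top hdw]
    linarith

theorem sq_le_three_mul_sum_Ioc_id {d w : ℕ} (hdw : 2 * d ≤ w) :
    w ^ 2 ≤ 3 * ∑ t ∈ Finset.Ioc d w, t := by
  nlinarith [two_mul_sum_Ioc_id_add (show d ≤ w by omega)]

theorem sum_sq_le_three_mul_sum_mul_card_filter {ι : Type*} {s : Finset ι} {f : ι → ℕ} {d T : ℕ}
    (hd : ∀ i ∈ s, 2 * d ≤ f i) (hT : ∀ i ∈ s, f i ≤ T) :
    ∑ i ∈ s, f i ^ 2 ≤ 3 * ∑ t ∈ Finset.Ioc d T, t * {i ∈ s | t ≤ f i}.card := by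
  calc ∑ i ∈ s, f i ^ 2
      ≤ ∑ i ∈ s, 3 * ∑ t ∈ Finset.Ioc d T with t ≤ f i, t := by
        refine Finset.sum_le_sum fun i hi => (sq_le_three_mul_sum_Ioc_id (hd i hi)).trans ?_
        gcongr
        intro t ht
        have hle := hT i hi
        simp only [Finset.mem_filter, Finset.mem_Ioc] at ht ⊢
        omega
    _ = 3 * ∑ t ∈ Finset.Ioc d T, t * {i ∈ s | t ≤ f i}.card := by
        simp only [← Finset.mul_sum, Finset.sum_filter]
        rw [Finset.sum_comm]
        simp only [← Finset.sum_filter, Finset.sum_const, smul_eq_mul, mul_comm]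

theorem sum_sq_card_points_le (hV : InjOn Prod.fst (V : Set (ℝ × ℝ))) {d T : ℕ} (hd : 1 ≤ d)
    (hlow : ∀ l ∈ L, 2 * d ≤ (points V l).card) (hhigh : ∀ l ∈ L, (points V l).card ≤ T) :
    ∑ l ∈ L, ((points V l).card : ℝ) ^ 2 ≤
      3 * (576 * (V.card : ℝ) ^ 2 * (2 / (d + 1)) + 12 * V.card * T) := by
  have hlayers : ∑ l ∈ L, ((points V l).card : ℝ) ^ 2 ≤
      3 * ∑ t ∈ Finset.Ioc d T, (t : ℝ) * {l ∈ L | t ≤ (points V l).card}.card := by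
    exact_mod_cast sum_sq_le_three_mul_sum_mul_card_filter hlow hhigh
  have hlayer : ∀ t ∈ Finset.Ioc d T, (t : ℝ) * {l ∈ L | t ≤ (points V l).card}.card ≤
      576 * (V.card : ℝ) ^ 2 * ((t : ℝ) ^ 2)⁻¹ + 12 * V.card := fun t ht => by
    have htpos : (0 : ℝ) < t := Nat.cast_pos.2 (Nat.zero_lt_of_lt (Finset.mem_Ioc.1 ht).1)
    have hcard := card_le_of_forall_le_card_points hV (L := {l ∈ L | t ≤ (points V l).card}) htpos
      (fun l hl => (by omega : 2 ≤ 2 * d).trans (hlow l (Finset.mem_filter.1 hl).1))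
      fun l hl => Nat.cast_le.2 (Finset.mem_filter.1 hl).2
    calc (t : ℝ) * {l ∈ L | t ≤ (points V l).card}.card
        ≤ t * (576 * (V.card : ℝ) ^ 2 / (t : ℝ) ^ 3 + 12 * V.card / t) := by gcongr
      _ = 576 * (V.card : ℝ) ^ 2 * ((t : ℝ) ^ 2)⁻¹ + 12 * V.card := by field_simp
  have hcount : ((Finset.Ioc d T).card : ℝ) ≤ T := by
    rw [Nat.card_Ioc]
    exact Nat.cast_le.2 (Nat.sub_le T d)
  refine hlayers.trans (mul_le_mul_of_nonneg_left ?_ zero_le_three)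
  calc ∑ t ∈ Finset.Ioc d T, (t : ℝ) * {l ∈ L | t ≤ (points V l).card}.card
      ≤ ∑ t ∈ Finset.Ioc d T, (576 * (V.card : ℝ) ^ 2 * ((t : ℝ) ^ 2)⁻¹ + 12 * V.card) :=
        Finset.sum_le_sum hlayer
    _ = 576 * (V.card : ℝ) ^ 2 * ∑ t ∈ Finset.Ioc d T, ((t : ℝ) ^ 2)⁻¹ +
          12 * V.card * (Finset.Ioc d T).card := by
        rw [Finset.sum_add_distrib, Finset.mul_sum, Finset.sum_const, nsmul_eq_mul,
          mul_comm (12 * (V.card : ℝ))]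
    _ ≤ 576 * (V.card : ℝ) ^ 2 * (2 / (d + 1)) + 12 * V.card * T := by
        gcongr
        rw [← Finset.Ioo_add_one_right_eq_Ioc]
        exact sum_Ioo_inv_sq_le d (T + 1)

end RichLines

section Dichotomy

variable {V P Q : Finset (ℝ × ℝ)} {L : Finset NonverticalLine} {n : ℕ}

/-- Every point of `P` is joined to every point of `Q` by a line of `L`. -/
def Joins (L : Finset NonverticalLine) (P Q : Finset (ℝ × ℝ)) : Prop :=
  ∀ p ∈ P, ∀ q ∈ Q, ∃ l ∈ L, p.2 = l p.1 ∧ q.2 = l q.1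

theorem Joins.symm (hL : Joins L P Q) : Joins L Q P := fun q hq p hp =>
  have ⟨l, hl, hpl, hql⟩ := hL p hp q hq
  ⟨l, hl, hql, hpl⟩

theorem Joins.mono {P' Q' : Finset (ℝ × ℝ)} (hL : Joins L P Q) (hP : P' ⊆ P) (hQ : Q' ⊆ Q) :
    Joins L P' Q' :=
  fun p hp q hq => hL p (hP hp) q (hQ hq)

/-- The number of pairs in `P × Q` both of whose points lie on `l`. -/
def pairCount (P Q : Finset (ℝ × ℝ)) (l : NonverticalLine) : ℕ :=
  (points P l).card * (points Q l).card

theorem Joins.card_mul_card_le_sum_pairCount (hL : Joins L P Q) :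
    P.card * Q.card ≤ ∑ l ∈ L, pairCount P Q l := by
  classical
  have hcover : P ×ˢ Q ⊆ L.biUnion fun l => points P l ×ˢ points Q l := fun x hx => by
    obtain ⟨hP, hQ⟩ := Finset.mem_product.1 hx
    obtain ⟨l, hl, hPl, hQl⟩ := hL _ hP _ hQ
    exact Finset.mem_biUnion.2
      ⟨l, hl, Finset.mem_product.2 ⟨mem_points.2 ⟨hP, hPl⟩, mem_points.2 ⟨hQ, hQl⟩⟩⟩
  simpa only [pairCount, Finset.card_product] using
    (Finset.card_le_card hcover).trans Finset.card_biUnion_le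

theorem pairCount_le_sq_card_points_union (P Q : Finset (ℝ × ℝ)) (l : NonverticalLine) :
    pairCount P Q l ≤ (points (P ∪ Q) l).card ^ 2 := by
  have hmono {R : Finset (ℝ × ℝ)} (hR : R ⊆ P ∪ Q) :
      (points R l).card ≤ (points (P ∪ Q) l).card :=
    Finset.card_le_card (Finset.filter_subset_filter _ hR)
  rw [sq]
  exact Nat.mul_le_mul (hmono Finset.subset_union_left) (hmono Finset.subset_union_right)

theorem sum_pairCount_le_card_mul_sq {k : ℕ} (hL : ∀ l ∈ L, (points (P ∪ Q) l).card ≤ k) :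
    ∑ l ∈ L, pairCount P Q l ≤ L.card * k ^ 2 :=
  Finset.sum_le_card_nsmul _ _ _ fun l hl =>
    (pairCount_le_sq_card_points_union P Q l).trans (Nat.pow_le_pow_left (hL l hl) 2)

theorem sum_pairCount_le_of_card_points_le (hV : InjOn Prod.fst (↑(P ∪ Q) : Set (ℝ × ℝ)))
    (hcard : (P ∪ Q).card ≤ 2 * n) (hlow : ∀ l ∈ L, 2 ^ 18 ≤ (points (P ∪ Q) l).card)
    (hhigh : ∀ l ∈ L, (points (P ∪ Q) l).card ≤ n / 2 ^ 10) :
    ∑ l ∈ L, (pairCount P Q l : ℝ) ≤ (n : ℝ) ^ 2 / 4 := by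
  have hcard' : ((P ∪ Q).card : ℝ) ≤ 2 * n := by exact_mod_cast hcard
  calc ∑ l ∈ L, (pairCount P Q l : ℝ)
      ≤ ∑ l ∈ L, ((points (P ∪ Q) l).card : ℝ) ^ 2 := by
        exact_mod_cast Finset.sum_le_sum fun l _ => pairCount_le_sq_card_points_union P Q l
    _ ≤ 3 * (576 * ((P ∪ Q).card : ℝ) ^ 2 * (2 / ((2 ^ 17 : ℕ) + 1)) +
          12 * (P ∪ Q).card * (n / 2 ^ 10 : ℕ)) :=
        sum_sq_card_points_le hV Nat.one_le_two_pow hlow hhigh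
    _ ≤ 3 * (576 * (2 * (n : ℝ)) ^ 2 * (2 / ((2 ^ 17 : ℕ) + 1)) +
          12 * (2 * n) * (n / (2 ^ 10 : ℕ))) := by
        gcongr
        exact Nat.cast_div_le
    _ ≤ (n : ℝ) ^ 2 / 4 := by
        norm_num
        nlinarith [sq_nonneg (n : ℝ)]

theorem card_le_two_pow_of_forall_le_card_points (hV : InjOn Prod.fst (V : Set (ℝ × ℝ)))
    (hn : 1 ≤ n) (hcard : V.card ≤ 2 * n) (htwo : ∀ l ∈ L, 2 ≤ (points V l).card)
    (hL : ∀ l ∈ L, (n : ℝ) / 2 ^ 10 ≤ (points V l).card) : (L.card : ℝ) ≤ 2 ^ 42 := by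
  have hcard' : (V.card : ℝ) ≤ 2 * n := by exact_mod_cast hcard
  have hn' : (1 : ℝ) ≤ n := by exact_mod_cast hn
  calc (L.card : ℝ)
      ≤ 576 * (V.card : ℝ) ^ 2 / ((n : ℝ) / 2 ^ 10) ^ 3 + 12 * V.card / ((n : ℝ) / 2 ^ 10) :=
        card_le_of_forall_le_card_points hV (by positivity) htwo hL
    _ ≤ 576 * (2 * (n : ℝ)) ^ 2 / ((n : ℝ) / 2 ^ 10) ^ 3 + 12 * (2 * n) / ((n : ℝ) / 2 ^ 10) := by
        gcongr
    _ = 2304 * 2 ^ 30 / n + 24 * 2 ^ 10 := by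
        field_simp
        ring
    _ ≤ 2304 * 2 ^ 30 / 1 + 24 * 2 ^ 10 := by gcongr
    _ ≤ 2 ^ 42 := by norm_num

theorem sum_pairCount_le_of_lt_card_points (hV : InjOn Prod.fst (↑(P ∪ Q) : Set (ℝ × ℝ)))
    (hn : 1 ≤ n) (hcard : (P ∪ Q).card ≤ 2 * n) (htwo : ∀ l ∈ L, 2 ≤ (points (P ∪ Q) l).card)
    (hhigh : ∀ l ∈ L, n / 2 ^ 10 < (points (P ∪ Q) l).card)
    (hpairs : ∀ l ∈ L, 2 ^ 44 * pairCount P Q l ≤ n ^ 2) :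
    ∑ l ∈ L, (pairCount P Q l : ℝ) ≤ (n : ℝ) ^ 2 / 4 := by
  have hhigh' : ∀ l ∈ L, (n : ℝ) / 2 ^ 10 ≤ (points (P ∪ Q) l).card := fun l hl => by
    have hlt := (Nat.div_lt_iff_lt_mul (by positivity)).1 (hhigh l hl)
    exact (div_le_iff₀ (by positivity)).2 (by exact_mod_cast hlt.le)
  have hpairs' : ∀ l ∈ L, (pairCount P Q l : ℝ) ≤ (n : ℝ) ^ 2 / 2 ^ 44 := fun l hl =>
    (le_div_iff₀' (by positivity)).2 (by exact_mod_cast hpairs l hl)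
  calc ∑ l ∈ L, (pairCount P Q l : ℝ) ≤ L.card * ((n : ℝ) ^ 2 / 2 ^ 44) := by
        simpa only [nsmul_eq_mul] using Finset.sum_le_card_nsmul L _ _ hpairs'
    _ ≤ 2 ^ 42 * ((n : ℝ) ^ 2 / 2 ^ 44) := by
        gcongr
        exact card_le_two_pow_of_forall_le_card_points hV hn hcard htwo hhigh'
    _ = (n : ℝ) ^ 2 / 4 := by ring

/-- The lines with at most `2 ^ 18` points carry half of the pairs only if there are many of them,
the medium lines carry at most a quarter of the pairs, and the number of lines with more than
`n / 2 ^ 10` points is bounded. -/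
theorem Joins.sq_le_or_exists_sq_le (hV : InjOn Prod.fst (↑(P ∪ Q) : Set (ℝ × ℝ)))
    (hP : P.card = n) (hQ : Q.card = n) (hL : Joins L P Q) :
    n ^ 2 ≤ 2 ^ 37 * L.card ∨ ∃ l ∈ L, n ^ 2 ≤ 2 ^ 44 * pairCount P Q l := by
  by_contra! ⟨hfew, hpoor⟩
  have hn : 1 ≤ n := Nat.one_le_iff_ne_zero.2 fun h => by simp [h] at hfew
  have hcard : (P ∪ Q).card ≤ 2 * n := (Finset.card_union_le P Q).trans (by omega)
  set low := {l ∈ L | (points (P ∪ Q) l).card ≤ 2 ^ 18}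
  set rest := {l ∈ L | ¬ (points (P ∪ Q) l).card ≤ 2 ^ 18} with hrest
  set mid := {l ∈ rest | (points (P ∪ Q) l).card ≤ n / 2 ^ 10}
  set high := {l ∈ rest | ¬ (points (P ∪ Q) l).card ≤ n / 2 ^ 10} with hhigh
  have hmemRest {l} (hl : l ∈ rest) : l ∈ L ∧ 2 ^ 18 < (points (P ∪ Q) l).card := by
    simpa [hrest] using hl
  have hmemHigh {l} (hl : l ∈ high) : l ∈ rest ∧ n / 2 ^ 10 < (points (P ∪ Q) l).card := by
    simpa only [hhigh, Finset.mem_filter, not_le] using hl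
  have hsumLow : (∑ l ∈ low, pairCount P Q l : ℝ) ≤ L.card * 2 ^ 36 := by
    have hle : ∑ l ∈ low, pairCount P Q l ≤ low.card * (2 ^ 18) ^ 2 :=
      sum_pairCount_le_card_mul_sq fun l hl => (Finset.mem_filter.1 hl).2
    exact_mod_cast hle.trans (Nat.mul_le_mul_right _ (Finset.card_filter_le L _))
  have hsumMid : (∑ l ∈ mid, pairCount P Q l : ℝ) ≤ (n : ℝ) ^ 2 / 4 :=
    sum_pairCount_le_of_card_points_le hV hcard
      (fun l hl => (hmemRest (Finset.mem_filter.1 hl).1).2.le)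
      fun l hl => (Finset.mem_filter.1 hl).2
  have hsumHigh : (∑ l ∈ high, pairCount P Q l : ℝ) ≤ (n : ℝ) ^ 2 / 4 :=
    sum_pairCount_le_of_lt_card_points hV hn hcard
      (fun l hl => (by norm_num : 2 ≤ 2 ^ 18).trans (hmemRest (hmemHigh hl).1).2.le)
      (fun l hl => (hmemHigh hl).2) fun l hl => (hpoor l (hmemRest (hmemHigh hl).1).1).le
  have htotal : (n : ℝ) ^ 2 ≤ ∑ l ∈ low, (pairCount P Q l : ℝ) +
      (∑ l ∈ mid, (pairCount P Q l : ℝ) + ∑ l ∈ high, (pairCount P Q l : ℝ)) := by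
    rw [Finset.sum_filter_add_sum_filter_not, Finset.sum_filter_add_sum_filter_not]
    have hsum := hL.card_mul_card_le_sum_pairCount
    rw [hP, hQ, ← sq] at hsum
    exact_mod_cast hsum
  have hfew' : 2 ^ 37 * (L.card : ℝ) < (n : ℝ) ^ 2 := by exact_mod_cast hfew
  linarith

end Dichotomy

section RichLine

variable {P Q R B : Finset (ℝ × ℝ)} {L : Finset NonverticalLine} {n : ℕ}

theorem card_mul_le_card_biUnion_add_choose_two {ι α : Type*} [DecidableEq α] {s : Finset ι}
    {A : ι → Finset α} {b : ℕ} (hb : ∀ i ∈ s, b ≤ (A i).card)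
    (hinter : (s : Set ι).Pairwise fun i j => (A i ∩ A j).card ≤ 1) :
    s.card * b ≤ (s.biUnion A).card + s.card.choose 2 := by
  classical
  induction s using Finset.induction_on with
  | empty => simp
  | insert a s ha ih =>
    have hmeet : (A a ∩ s.biUnion A).card ≤ s.card := by
      rw [Finset.inter_biUnion]
      refine Finset.card_biUnion_le_card_mul s _ 1 (fun i hi => ?_) |>.trans (mul_one _).le
      exact hinter (Finset.mem_insert_self a s) (Finset.mem_insert_of_mem hi)
        (ne_of_mem_of_not_mem hi ha).symm
    have hunion := Finset.card_union_add_card_inter (A a) (s.biUnion A)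
    have hs := ih (fun i hi => hb i (Finset.mem_insert_of_mem hi))
      (hinter.mono (Finset.coe_subset.2 (Finset.subset_insert a s)))
    have hchoose : (s.card + 1).choose 2 = s.card + s.card.choose 2 := by
      rw [Nat.choose_succ_succ', Nat.choose_one_right]
    have ha' := hb a (Finset.mem_insert_self a s)
    rw [Finset.biUnion_insert, Finset.card_insert_of_notMem ha, hchoose, add_one_mul]
    omega

theorem Joins.card_le_card_filter (hB : InjOn Prod.fst (B : Set (ℝ × ℝ))) (hL : Joins L R B)
    {l₀ : NonverticalLine} (hBl₀ : ∀ q ∈ B, q.2 = l₀ q.1) {p : ℝ × ℝ} (hp : p ∈ R)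
    (hpl₀ : p.2 ≠ l₀ p.1) : B.card ≤ {l ∈ L | p.2 = l p.1}.card := by
  refine Finset.card_le_card_of_forall_subsingleton (fun q l => q.2 = l q.1) (fun q hq => ?_) ?_
  · obtain ⟨l, hl, hpl, hql⟩ := hL p hp q hq
    exact ⟨l, Finset.mem_filter.2 ⟨hl, hpl⟩, hql⟩
  · rintro l hl q ⟨hq, hql⟩ r ⟨hr, hrl⟩
    by_contra hne
    have hll₀ : l = l₀ := eq_of_apply_eq_of_apply_eq (fun h => hne (hB hq hr h))
      (hql.symm.trans (hBl₀ q hq)) (hrl.symm.trans (hBl₀ r hr))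
    exact hpl₀ (hll₀ ▸ (Finset.mem_filter.1 hl).2)

open Classical in
theorem card_filter_inter_filter_le_one {p r : ℝ × ℝ} (h : p.1 ≠ r.1) :
    ({l ∈ L | p.2 = l p.1} ∩ {l ∈ L | r.2 = l r.1}).card ≤ 1 := by
  refine Finset.card_le_one.2 fun l hl k hk => ?_
  simp only [Finset.mem_inter, Finset.mem_filter] at hl hk
  exact eq_of_apply_eq_of_apply_eq h (hl.1.2.symm.trans hk.1.2) (hl.2.2.symm.trans hk.2.2)

theorem Joins.min_card_mul_card_le (hR : InjOn Prod.fst (R : Set (ℝ × ℝ)))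
    (hB : InjOn Prod.fst (B : Set (ℝ × ℝ))) (hL : Joins L R B) {l₀ : NonverticalLine}
    (hRl₀ : ∀ p ∈ R, p.2 ≠ l₀ p.1) (hBl₀ : ∀ q ∈ B, q.2 = l₀ q.1) :
    min R.card B.card * B.card ≤ 2 * L.card := by
  classical
  obtain ⟨S, hSR, hS⟩ := Finset.exists_subset_card_eq (min_le_left R.card B.card)
  have hbonferroni : S.card * B.card ≤
      (S.biUnion fun p => {l ∈ L | p.2 = l p.1}).card + S.card.choose 2 :=
    card_mul_le_card_biUnion_add_choose_two
      (fun p hp => hL.card_le_card_filter hB hBl₀ (hSR hp) (hRl₀ p (hSR hp)))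
      fun p hp r hr hne =>
        card_filter_inter_filter_le_one fun h => hne (hR (hSR hp) (hSR hr) h)
  have hunion : (S.biUnion fun p => {l ∈ L | p.2 = l p.1}).card ≤ L.card :=
    Finset.card_le_card (Finset.biUnion_subset.2 fun p _ => Finset.filter_subset _ L)
  have hchoose : 2 * S.card.choose 2 ≤ S.card * B.card := by
    rw [Nat.choose_two_right]
    refine (Nat.mul_div_le _ 2).trans (Nat.mul_le_mul_left _ ?_)
    exact (Nat.sub_le _ 1).trans (hS ▸ min_le_right _ _)
  rw [← hS]
  omega

theorem Joins.sq_le_of_two_mul_card_points_le (hP : InjOn Prod.fst (P : Set (ℝ × ℝ)))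
    (hQ : InjOn Prod.fst (Q : Set (ℝ × ℝ))) (hL : Joins L P Q) (hcard : P.card = n)
    {l : NonverticalLine} (hhalf : 2 * (points P l).card ≤ n) {H : ℕ} (hH : 2 ≤ H)
    (hmany : n ≤ H * (points Q l).card) : n ^ 2 ≤ 2 * H ^ 2 * L.card := by
  classical
  set R := P \ points P l
  have hRP : R ⊆ P := Finset.sdiff_subset
  have hQl : points Q l ⊆ Q := Finset.filter_subset _ Q
  have hRcard : n ≤ H * R.card := by
    have hsdiff : R.card + (points P l).card = n :=
      (Finset.card_sdiff_add_card_eq_card (Finset.filter_subset _ P)).trans hcard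
    exact (by omega : n ≤ 2 * R.card).trans (Nat.mul_le_mul_right _ hH)
  have hlines := Joins.min_card_mul_card_le (hP.mono (Finset.coe_subset.2 hRP))
    (hQ.mono (Finset.coe_subset.2 hQl)) (hL.mono hRP hQl) (l₀ := l)
    (fun p hp hpl => (Finset.mem_sdiff.1 hp).2 (mem_points.2 ⟨hRP hp, hpl⟩))
    (fun q hq => (mem_points.1 hq).2)
  calc n ^ 2 = n * n := sq n
    _ ≤ (H * min R.card (points Q l).card) * (H * (points Q l).card) := by
        rw [← Nat.mul_min_mul_left]
        exact Nat.mul_le_mul (le_min hRcard hmany) hmany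
    _ = H ^ 2 * (min R.card (points Q l).card * (points Q l).card) := by ring
    _ ≤ H ^ 2 * (2 * L.card) := Nat.mul_le_mul_left _ hlines
    _ = 2 * H ^ 2 * L.card := by ring

theorem Joins.sq_le_two_pow_mul_card (hV : InjOn Prod.fst (↑(P ∪ Q) : Set (ℝ × ℝ)))
    (hP : P.card = n) (hQ : Q.card = n) (hL : Joins L P Q)
    (hrich : ∀ l ∈ L, (points P l).card + (points Q l).card ≤ n) :
    n ^ 2 ≤ 2 ^ 89 * L.card := by
  have hVP : InjOn Prod.fst (P : Set (ℝ × ℝ)) := hV.mono (by simp)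
  have hVQ : InjOn Prod.fst (Q : Set (ℝ × ℝ)) := hV.mono (by simp)
  rcases hL.sq_le_or_exists_sq_le hV hP hQ with hmany | ⟨l, hl, hpairs⟩
  · exact hmany.trans (Nat.mul_le_mul_right _ (by norm_num))
  have hle := hrich l hl
  rw [pairCount] at hpairs
  have hnP : n ≤ 2 ^ 44 * (points P l).card := by nlinarith
  have hnQ : n ≤ 2 ^ 44 * (points Q l).card := by nlinarith
  have hH : 2 ≤ 2 ^ 44 := by norm_num
  rcases le_total (points P l).card (points Q l).card with hPQ | hQP
  · exact hL.sq_le_of_two_mul_card_points_le hVP hVQ hP (by omega) hH hnQ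
  · exact hL.symm.sq_le_of_two_mul_card_points_le hVQ hVP hQ (by omega) hH hnP

end RichLine

section Transfer

variable {P Q : Finset (ℝ × ℝ)} {L : Set (ℝ × ℝ)} {n : ℕ}

theorem IsLine.eq_lineThrough (hL : IsLine L) {p q : ℝ × ℝ} (hp : p ∈ L) (hq : q ∈ L)
    (hpq : p ≠ q) : L = lineThrough p q := by
  obtain ⟨a, b, -, rfl⟩ := hL
  exact congrArg SetLike.coe (affineSpan_pair_eq_of_mem_of_mem_of_ne hp hq hpq).symm

theorem finite_bichromLines (hPQ : Disjoint P Q) : (BichromLines P Q).Finite := by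
  refine ((P ×ˢ Q).finite_toSet.image fun x => lineThrough x.1 x.2).subset ?_
  rintro L ⟨hL, ⟨p, hp, hpL⟩, q, hq, hqL⟩
  exact ⟨(p, q), Finset.mem_coe.2 (Finset.mk_mem_product hp hq),
    (hL.eq_lineThrough hpL hqL (Finset.disjoint_iff_ne.1 hPQ p hp q hq)).symm⟩

namespace NonverticalLine

/-- The line as a set of points of the plane. -/
def toSet (l : NonverticalLine) : Set (ℝ × ℝ) := {p | p.2 = l p.1}

theorem injective_toSet : Function.Injective toSet := fun l k h => by
  have hlk (x : ℝ) : l x = k x := show (x, l x) ∈ k.toSet from h ▸ rfl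
  exact eq_of_apply_eq_of_apply_eq zero_ne_one (hlk 0) (hlk 1)

theorem isLine_toSet (l : NonverticalLine) : IsLine l.toSet := by
  have hparam (x : ℝ) : AffineMap.lineMap (0, l 0) (1, l 1) x = (x, l x) := by
    ext
    · simp [AffineMap.lineMap_apply]
    · simp only [AffineMap.lineMap_apply, apply_def, vsub_eq_sub, vadd_eq_add, Prod.snd_add,
        Prod.smul_snd, Prod.snd_sub, smul_eq_mul]
      ring
  refine ⟨(0, l 0), (1, l 1), by simp, Set.ext fun p => ?_⟩
  rw [lineThrough, SetLike.mem_coe, mem_affineSpan_pair_iff_exists_lineMap_eq]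
  simp only [hparam]
  exact ⟨fun hp => ⟨p.1, Prod.ext rfl hp.symm⟩, by rintro ⟨x, rfl⟩; rfl⟩

theorem richness_toSet (V : Finset (ℝ × ℝ)) (l : NonverticalLine) :
    richness V l.toSet = (points V l).card := by
  rw [richness, ← ncard_coe_finset]
  congr 1
  ext p
  simp [toSet, mem_points]

end NonverticalLine

theorem card_points_add_card_points (hPQ : Disjoint P Q) (l : NonverticalLine) :
    (points P l).card + (points Q l).card = (points (P ∪ Q) l).card := by
  rw [points, points, points, Finset.filter_union,
    Finset.card_union_of_disjoint (Finset.disjoint_filter_filter hPQ)]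

theorem sq_le_ncard_bichromLines_of_injOn_fst (hV : InjOn Prod.fst (↑(P ∪ Q) : Set (ℝ × ℝ)))
    (hPQ : Disjoint P Q) (hP : P.card = n) (hQ : Q.card = n)
    (hrich : ∀ L, IsLine L → richness (P ∪ Q) L ≤ n) :
    n ^ 2 ≤ 2 ^ 89 * (BichromLines P Q).ncard := by
  have hfin := finite_bichromLines hPQ
  set L := (hfin.preimage injective_toSet.injOn).toFinset with hLdef
  have hjoins : Joins L P Q := fun p hp q hq => by
    have hne : p.1 ≠ q.1 := fun h => Finset.disjoint_iff_ne.1 hPQ p hp q hq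
      (hV (Finset.mem_union_left Q hp) (Finset.mem_union_right P hq) h)
    obtain ⟨l, hpl, hql⟩ := exists_apply_eq_of_fst_ne hne
    exact ⟨l, (Finite.mem_toFinset _).2 ⟨isLine_toSet l, ⟨p, hp, hpl⟩, q, hq, hql⟩, hpl, hql⟩
  have hcard : L.card ≤ (BichromLines P Q).ncard := by
    rw [← ncard_coe_finset, hLdef, Finite.coe_toFinset]
    exact ncard_le_ncard_of_injOn toSet (fun l hl => hl) injective_toSet.injOn hfin
  have hsq : n ^ 2 ≤ 2 ^ 89 * L.card :=
    hjoins.sq_le_two_pow_mul_card hV hP hQ fun l _ => by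
      rw [card_points_add_card_points hPQ, ← richness_toSet]
      exact hrich _ (isLine_toSet l)
  exact hsq.trans (Nat.mul_le_mul_left _ hcard)

section AffineEquiv

variable (φ : (ℝ × ℝ) ≃ᵃ[ℝ] (ℝ × ℝ))

theorem image_lineThrough (p q : ℝ × ℝ) : φ '' lineThrough p q = lineThrough (φ p) (φ q) := by
  have hspan := AffineSubspace.map_span φ.toAffineMap {p, q}
  rw [image_pair] at hspan
  exact congrArg SetLike.coe hspan

theorem IsLine.image (hL : IsLine L) : IsLine (φ '' L) := by
  obtain ⟨p, q, hpq, rfl⟩ := hL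
  exact ⟨φ p, φ q, φ.injective.ne hpq, image_lineThrough φ p q⟩

theorem richness_map (S : Finset (ℝ × ℝ)) (L : Set (ℝ × ℝ)) :
    richness (S.map φ.toEquiv.toEmbedding) L = richness S (φ.symm '' L) := by
  have himage : φ '' (S ∩ φ.symm '' L) = φ '' S ∩ L := by
    rw [image_inter φ.injective, ← image_comp]
    simp
  rw [richness, richness, ← ncard_image_of_injective (↑S ∩ φ.symm '' L) φ.injective, himage,
    Finset.coe_map]
  rfl

theorem ncard_bichromLines_map_le (hPQ : Disjoint P Q) :
    (BichromLines (P.map φ.toEquiv.toEmbedding) (Q.map φ.toEquiv.toEmbedding)).ncard ≤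
      (BichromLines P Q).ncard := by
  have hsurj : BichromLines (P.map φ.toEquiv.toEmbedding) (Q.map φ.toEquiv.toEmbedding) ⊆
      image φ '' BichromLines P Q := by
    rintro L ⟨hL, ⟨p, hp, hpL⟩, q, hq, hqL⟩
    obtain ⟨p, hpP, rfl⟩ := Finset.mem_map.1 hp
    obtain ⟨q, hqQ, rfl⟩ := Finset.mem_map.1 hq
    exact ⟨φ.symm '' L, ⟨hL.image φ.symm, ⟨p, hpP, _, hpL, φ.symm_apply_apply p⟩,
      q, hqQ, _, hqL, φ.symm_apply_apply q⟩, φ.toEquiv.image_symm_image L⟩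
  have hfin := finite_bichromLines hPQ
  exact (ncard_le_ncard hsurj (hfin.image _)).trans (ncard_image_le hfin)

end AffineEquiv

/-- The shear `(x, y) ↦ (x + ε * y, y)`. -/
def shear (ε : ℝ) : (ℝ × ℝ) ≃ᵃ[ℝ] (ℝ × ℝ) :=
  LinearEquiv.toAffineEquiv
    { toFun := fun p => (p.1 + ε * p.2, p.2)
      map_add' := fun p q => by ext <;> simp; ring
      map_smul' := fun c p => by ext <;> simp; ring
      invFun := fun p => (p.1 - ε * p.2, p.2)
      left_inv := fun p => by simp
      right_inv := fun p => by simp }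

theorem shear_apply (ε : ℝ) (p : ℝ × ℝ) : shear ε p = (p.1 + ε * p.2, p.2) := rfl

theorem exists_injOn_fst_shear (V : Finset (ℝ × ℝ)) :
    ∃ ε, InjOn (fun p => (shear ε p).1) (V : Set (ℝ × ℝ)) := by
  classical
  obtain ⟨ε, hε⟩ := Infinite.exists_notMem_finset
    ((V ×ˢ V).image fun x => -(x.1.1 - x.2.1) / (x.1.2 - x.2.2))
  refine ⟨ε, fun p hp q hq hpq => ?_⟩
  simp only [shear_apply] at hpq
  have hsnd : p.2 = q.2 := by
    by_contra hne
    refine hε (Finset.mem_image.2 ⟨(p, q), Finset.mk_mem_product hp hq, ?_⟩)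
    rw [div_eq_iff (sub_ne_zero.2 hne)]
    linarith
  exact Prod.ext (by simpa [hsnd] using hpq) hsnd

theorem sq_le_ncard_bichromLines (hPQ : Disjoint P Q) (hP : P.card = n) (hQ : Q.card = n)
    (hrich : ∀ L, IsLine L → richness (P ∪ Q) L ≤ n) :
    n ^ 2 ≤ 2 ^ 89 * (BichromLines P Q).ncard := by
  obtain ⟨ε, hε⟩ := exists_injOn_fst_shear (P ∪ Q)
  set f := (shear ε).toEquiv.toEmbedding
  have hV : InjOn Prod.fst (↑(P.map f ∪ Q.map f) : Set (ℝ × ℝ)) := by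
    rw [← Finset.map_union, Finset.coe_map]
    rintro _ ⟨p, hp, rfl⟩ _ ⟨q, hq, rfl⟩ hpq
    rw [hε hp hq hpq]
  have hsheared : n ^ 2 ≤ 2 ^ 89 * (BichromLines (P.map f) (Q.map f)).ncard :=
    sq_le_ncard_bichromLines_of_injOn_fst hV ((Finset.disjoint_map f).2 hPQ)
      ((P.card_map f).trans hP) ((Q.card_map f).trans hQ) fun L hL => by
        rw [← Finset.map_union, richness_map]
        exact hrich _ (hL.image _)
  exact hsheared.trans (Nat.mul_le_mul_left _ (ncard_bichromLines_map_le _ hPQ))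

end Transfer

/-- If every line contains at most `n` points of `P ∪ Q` with `|P| = |Q| = n`,
then there are at least `C · n²` bichromatic induced lines. -/
theorem bichromatic_beck_quadratic :
    ∃ C : ℝ, 0 < C ∧ ∀ (P Q : Finset (ℝ × ℝ)) (n : ℕ),
      Disjoint P Q → P.card = n → Q.card = n →
      (∀ L : Set (ℝ × ℝ), IsLine L → richness (P ∪ Q) L ≤ n) →
      C * (n : ℝ) ^ 2 ≤ ((BichromLines P Q).ncard : ℝ) := by
  refine ⟨1 / 2 ^ 89, by positivity, fun P Q n hPQ hP hQ hrich => ?_⟩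
  have hsq : (n : ℝ) ^ 2 ≤ 2 ^ 89 * (BichromLines P Q).ncard := by
    exact_mod_cast sq_le_ncard_bichromLines hPQ hP hQ hrich
  rw [one_div_mul_eq_div]
  exact (div_le_iff₀' (by positivity)).2 hsq
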